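/- The number of positive integers n ≤ x such that there exists t with 2^t ≡ -1 (mod n) is at least c·x/log x for some constant c > 0 and all sufficiently large x. -/

import Mathlib

open Finset in
/-- The quadratic character mod 8 attached to 2, as a real function. -/
noncomputable def chiR (n : ℕ) : ℝ := ((ZMod.χ₈ (n : ZMod 8) : ℤ) : ℝ)

lemma chiR_eq (n : ℕ) :
    chiR n = if n % 2 = 0 then 0 else if n % 8 = 1 ∨ n % 8 = 7 then 1 else -1 := by
  unfold chiR
  rw [ZMod.χ₈_nat_eq_if_mod_eight]
  split_ifs <;> simp

lemma chiR_mul (m n : ℕ) : chiR (m * n) = chiR m * chiR n := by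
  unfold chiR
  push_cast
  rw [map_mul]
  push_cast
  rfl

lemma chiR_abs (n : ℕ) : |chiR n| ≤ 1 := by
  rw [chiR_eq]; split_ifs <;> simp

lemma chiR_sum (n : ℕ) : ∑ k ∈ Finset.Ioc 0 n, chiR k =
    if n % 8 = 1 ∨ n % 8 = 2 then 1 else if n % 8 = 5 ∨ n % 8 = 6 then -1 else 0 := by
  induction n with
  | zero => simp
  | succ n ih =>
    rw [Finset.sum_Ioc_succ_top (Nat.zero_le n), ih, chiR_eq]
    have h : n % 8 < 8 := Nat.mod_lt _ (by norm_num)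
    have h2 : (n + 1) % 2 = (n % 8 + 1) % 2 := by omega
    have h8 : (n + 1) % 8 = (n % 8 + 1) % 8 := by omega
    rw [h2, h8]
    generalize n % 8 = r at *
    interval_cases r <;> norm_num

lemma chiR_sum_abs (n : ℕ) : |∑ k ∈ Finset.Ioc 0 n, chiR k| ≤ 1 := by
  rw [chiR_sum]; split_ifs <;> simp

lemma abel_bound (g : ℕ → ℝ) (hg : Antitone g) (h0 : ∀ n, 0 ≤ g n) (m n : ℕ) (hmn : m ≤ n) :
    |∑ k ∈ Finset.Ioc m n, chiR k * g k| ≤ 2 * g (m + 1) := by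
  have key : |∑ k ∈ Finset.Ioc m n, chiR k * g k - (∑ k ∈ Finset.Ioc 0 n, chiR k) * g (n + 1)|
      ≤ 2 * g (m + 1) - g (n + 1) := by
    induction n, hmn using Nat.le_induction with
    | base =>
      simp only [Finset.Ioc_self, Finset.sum_empty, zero_sub, abs_neg, abs_mul]
      rw [abs_of_nonneg (h0 _)]
      nlinarith [chiR_sum_abs m, h0 (m + 1)]
    | succ n hn ih =>
      rw [Finset.sum_Ioc_succ_top hn]
      have hs := Finset.sum_Ioc_succ_top (Nat.zero_le n) chiR
      have hb := chiR_sum_abs (n + 1)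
      set S := ∑ k ∈ Finset.Ioc 0 n, chiR k
      set S' := ∑ k ∈ Finset.Ioc 0 (n + 1), chiR k
      have ha := hg (Nat.le_succ (n + 1))
      have : |S' * (g (n + 1) - g (n + 1 + 1))| ≤ g (n + 1) - g (n + 1 + 1) := by
        rw [abs_mul, abs_of_nonneg (sub_nonneg.2 ha)]
        exact mul_le_of_le_one_left (sub_nonneg.2 ha) hb
      have h3 : chiR (n + 1) = S' - S := by linarith
      rw [h3]
      calc _ = |(∑ k ∈ Finset.Ioc m n, chiR k * g k - S * g (n + 1))
              + S' * (g (n + 1) - g (n + 1 + 1))| := by congr 1; ring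
        _ ≤ _ := (abs_add_le _ _).trans (by linarith)
  have hb := chiR_sum_abs n
  have : |(∑ k ∈ Finset.Ioc 0 n, chiR k) * g (n + 1)| ≤ g (n + 1) := by
    rw [abs_mul, abs_of_nonneg (h0 _)]
    exact mul_le_of_le_one_left (h0 _) hb
  rw [abs_le] at *
  constructor <;> linarith [key.1, key.2, this.1, this.2]

/-- Partial sums of L(1, χ). -/
noncomputable def TR (n : ℕ) : ℝ := ∑ k ∈ Finset.Ioc 0 n, chiR k / k

lemma TR_sub (m n : ℕ) (hmn : m ≤ n) : |TR n - TR m| ≤ 2 / ((m : ℝ) + 1) := by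
  have h : TR n - TR m = ∑ k ∈ Finset.Ioc m n, chiR k / k := by
    unfold TR
    rw [← Finset.sum_Ioc_consecutive _ (Nat.zero_le m) hmn]
    ring
  rw [h]
  have := abel_bound (fun k => if k = 0 then 1 else 1 / (k : ℝ)) ?_ ?_ m n hmn
  · have e : ∑ k ∈ Finset.Ioc m n, chiR k / k
        = ∑ k ∈ Finset.Ioc m n, chiR k * (if k = 0 then 1 else 1 / (k : ℝ)) := by
      refine Finset.sum_congr rfl fun k hk => ?_
      have : k ≠ 0 := by have := Finset.mem_Ioc.1 hk; omega
      simp [this, div_eq_mul_inv]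
    rw [e]
    refine this.trans (le_of_eq ?_)
    simp [div_eq_mul_inv]
  · refine antitone_nat_of_succ_le fun k => ?_
    rcases Nat.eq_zero_or_pos k with rfl | hk
    · simp
    · have hk' : k ≠ 0 := by omega
      simp only [hk', Nat.succ_ne_zero, if_false]
      have : (0 : ℝ) < k := by exact_mod_cast hk
      push_cast
      gcongr
      linarith
  · intro k
    split_ifs <;> positivity

lemma TR_ge (n : ℕ) (hn : 7 ≤ n) : 1 / 4 ≤ TR n := by
  have h := TR_sub 7 n hn
  have h7 : TR 7 = 1 - 1 / 3 - 1 / 5 + 1 / 7 := by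
    unfold TR
    simp only [chiR_eq]
    simp [Finset.sum_Ioc_succ_top]
    norm_num
  rw [h7, abs_le] at h
  norm_num at h
  linarith [h.1]

lemma sum_log_chi_bound : ∃ C : ℝ, ∀ N : ℕ,
    |∑ n ∈ Finset.Ioc 0 N, chiR n / n * Real.log n| ≤ C := by
  let g : ℕ → ℝ := fun k => Real.log (max k 3 : ℕ) / (max k 3 : ℕ)
  have hg : Antitone g := by
    intro a b hab
    have he : ∀ k : ℕ, Real.exp 1 ≤ ((max k 3 : ℕ) : ℝ) := by
      intro k
      have : (3 : ℝ) ≤ ((max k 3 : ℕ) : ℝ) := by exact_mod_cast le_max_right k 3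
      linarith [Real.exp_one_lt_d9]
    exact Real.log_div_self_antitoneOn (he a) (he b)
      (by exact_mod_cast max_le_max_right 3 hab)
  have h0 : ∀ n, 0 ≤ g n := fun n => by
    have := Real.log_natCast_nonneg (max n 3)
    positivity
  refine ⟨2 * g 1 + g 1, fun N => ?_⟩
  have hA := abel_bound g hg h0 0 N (Nat.zero_le N)
  have hd : |∑ n ∈ Finset.Ioc 0 N, chiR n / n * Real.log n
      - ∑ k ∈ Finset.Ioc 0 N, chiR k * g k| ≤ g 1 := by
    rw [← Finset.sum_sub_distrib]
    refine (Finset.abs_sum_le_sum_abs _ _).trans ?_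
    calc _ ≤ ∑ n ∈ Finset.Ioc 0 N, (if n = 1 then g 1 else 0) := by
          refine Finset.sum_le_sum fun n hn => ?_
          have hn0 := (Finset.mem_Ioc.1 hn).1
          by_cases h1 : n = 1
          · subst h1
            simp only [if_true]
            have : chiR 1 = 1 := by rw [chiR_eq]; norm_num
            rw [this]
            simp [abs_of_nonneg (h0 1)]
          · by_cases h2 : n = 2
            · subst h2
              have : chiR 2 = 0 := by rw [chiR_eq]; norm_num
              simp [this]
            · have : max n 3 = n := by omega
              simp only [g, this, h1, if_false]
              rw [show chiR n / n * Real.log n - chiR n * (Real.log n / n) = 0 by ring]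
              simp
      _ ≤ g 1 := by
          rw [Finset.sum_ite_eq']
          split_ifs
          · exact le_rfl
          · exact h0 1
  have := abs_add_le (∑ n ∈ Finset.Ioc 0 N, chiR n / n * Real.log n
      - ∑ k ∈ Finset.Ioc 0 N, chiR k * g k) (∑ k ∈ Finset.Ioc 0 N, chiR k * g k)
  rw [sub_add_cancel] at this
  simp only [zero_add] at hA
  linarith

open ArithmeticFunction in
lemma sum_log_chi_eq (N : ℕ) :
    ∑ n ∈ Finset.Ioc 0 N, chiR n / n * Real.log n
      = ∑ d ∈ Finset.Ioc 0 N, (vonMangoldt d * (chiR d / d)) * TR (N / d) := by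
  let f : ArithmeticFunction ℝ := ⟨fun d => vonMangoldt d * (chiR d / d), by simp⟩
  let g : ArithmeticFunction ℝ := ⟨fun d => chiR d / d, by simp⟩
  have h := sum_Ioc_mul_eq_sum_sum f g N
  have h1 : ∀ n ∈ Finset.Ioc 0 N, (f * g) n = chiR n / n * Real.log n := by
    intro n hn
    rw [ArithmeticFunction.mul_apply, ← vonMangoldt_sum, Finset.mul_sum,
      Nat.sum_divisorsAntidiagonal (fun i j => f i * g j)]
    refine Finset.sum_congr rfl fun d hd => ?_
    obtain ⟨⟨e, rfl⟩, hn0⟩ := Nat.mem_divisors.1 hd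
    have hd0 : d ≠ 0 := by rintro rfl; simp at hn0
    rw [Nat.mul_div_cancel_left _ (Nat.pos_of_ne_zero hd0)]
    change vonMangoldt d * (chiR d / d) * (chiR e / e) = _
    rw [chiR_mul]
    push_cast
    rw [mul_div_mul_comm]
    ring
  rw [← Finset.sum_congr rfl h1, h]
  rfl

lemma psi_nat_le (N : ℕ) : ∑ d ∈ Finset.Ioc 0 N, ArithmeticFunction.vonMangoldt d
    ≤ (Real.log 4 + 4) * N := by
  have := Chebyshev.psi_le_const_mul_self (x := (N : ℝ)) (by positivity)
  simpa [Chebyshev.psi] using this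

open ArithmeticFunction in
lemma sum_chi_vonMangoldt_bound : ∃ C : ℝ, ∀ N : ℕ, 7 ≤ N →
    |∑ d ∈ Finset.Ioc 0 N, vonMangoldt d * (chiR d / d)| ≤ C := by
  obtain ⟨C, hC⟩ := sum_log_chi_bound
  refine ⟨4 * (C + 2 * (Real.log 4 + 4)), fun N hN => ?_⟩
  have h := hC N
  rw [sum_log_chi_eq] at h
  have hN0 : (0 : ℝ) < N := by exact_mod_cast (by omega : 0 < N)
  have hT := TR_ge N hN
  set M := ∑ d ∈ Finset.Ioc 0 N, vonMangoldt d * (chiR d / d) with hM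
  have hd : |M * TR N - ∑ d ∈ Finset.Ioc 0 N, (vonMangoldt d * (chiR d / d)) * TR (N / d)|
      ≤ 2 * (Real.log 4 + 4) := by
    rw [hM, Finset.sum_mul, ← Finset.sum_sub_distrib]
    refine (Finset.abs_sum_le_sum_abs _ _).trans ?_
    calc _ ≤ ∑ d ∈ Finset.Ioc 0 N, vonMangoldt d * (2 / N) := by
          refine Finset.sum_le_sum fun d hd => ?_
          have hd0 : 0 < d := (Finset.mem_Ioc.1 hd).1
          have hdr : (0 : ℝ) < d := by exact_mod_cast hd0
          rw [← mul_sub, abs_mul, abs_mul, abs_of_nonneg vonMangoldt_nonneg, mul_assoc]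
          refine mul_le_mul_of_nonneg_left ?_ vonMangoldt_nonneg
          have h1 := TR_sub (N / d) N (Nat.div_le_self _ _)
          have h2 : |chiR d / d| ≤ 1 / d := by
            rw [abs_div, abs_of_pos hdr]
            gcongr
            exact chiR_abs d
          have h3 : (N : ℝ) ≤ d * ((N / d : ℕ) + 1) := by
            exact_mod_cast (Nat.lt_mul_div_succ N hd0).le
          calc |chiR d / d| * |TR N - TR (N / d)|
              ≤ 1 / d * (2 / (((N / d : ℕ) : ℝ) + 1)) := by gcongr
            _ = 2 / (d * (((N / d : ℕ) : ℝ) + 1)) := by field_simp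
            _ ≤ 2 / N := by gcongr
      _ = (∑ d ∈ Finset.Ioc 0 N, vonMangoldt d) * (2 / N) := by rw [Finset.sum_mul]
      _ ≤ ((Real.log 4 + 4) * N) * (2 / N) := by
          gcongr
          exact psi_nat_le N
      _ = _ := by field_simp
  have h4 : |M * TR N| ≤ C + 2 * (Real.log 4 + 4) := by
    rw [abs_le] at *
    constructor <;> linarith [h.1, h.2, hd.1, hd.2]
  rw [abs_mul, abs_of_pos (by linarith : 0 < TR N)] at h4
  nlinarith [abs_nonneg M]

open ArithmeticFunction in
lemma mertens_first (N : ℕ) (hN : 0 < N) :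
    |∑ d ∈ Finset.Ioc 0 N, vonMangoldt d / d - Real.log N| ≤ Real.log 4 + 4 := by
  have hN0 : (0 : ℝ) < N := by exact_mod_cast hN
  have hfac : ∑ n ∈ Finset.Ioc 0 N, Real.log n = Real.log (N.factorial) := by
    clear hN hN0
    induction N with
    | zero => simp
    | succ n ih =>
      rw [Finset.sum_Ioc_succ_top (Nat.zero_le n), ih, Nat.factorial_succ]
      push_cast
      rw [Real.log_mul (by positivity) (by positivity)]
      ring
  have hid : ∑ n ∈ Finset.Ioc 0 N, Real.log n
      = ∑ d ∈ Finset.Ioc 0 N, vonMangoldt d * (N / d : ℕ) := by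
    have := sum_Ioc_mul_zeta_eq_sum vonMangoldt N
    rw [vonMangoldt_mul_zeta] at this
    simpa using this
  have hup : Real.log (N.factorial) ≤ N * Real.log N := by
    rw [← Real.log_pow]
    exact Real.log_le_log (by positivity) (by exact_mod_cast Nat.factorial_le_pow N)
  have hlo : N * Real.log N - N ≤ Real.log (N.factorial) := by
    have := Stirling.le_log_factorial_stirling (n := N) (by omega)
    have h1 := Real.log_natCast_nonneg N
    have h2 : 0 ≤ Real.log (2 * Real.pi) := Real.log_nonneg (by linarith [Real.pi_gt_three])
    linarith
  have hle : ∑ d ∈ Finset.Ioc 0 N, vonMangoldt d * (N / d : ℕ)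
      ≤ N * ∑ d ∈ Finset.Ioc 0 N, vonMangoldt d / d := by
    rw [Finset.mul_sum]
    refine Finset.sum_le_sum fun d hd => ?_
    calc vonMangoldt d * (N / d : ℕ) ≤ vonMangoldt d * (N / d : ℝ) := by
          gcongr
          exact Nat.cast_div_le
      _ = _ := by ring
  have hge : N * ∑ d ∈ Finset.Ioc 0 N, vonMangoldt d / d - ∑ d ∈ Finset.Ioc 0 N, vonMangoldt d
      ≤ ∑ d ∈ Finset.Ioc 0 N, vonMangoldt d * (N / d : ℕ) := by
    rw [Finset.mul_sum, ← Finset.sum_sub_distrib]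
    refine Finset.sum_le_sum fun d hd => ?_
    have hd0 : 0 < d := (Finset.mem_Ioc.1 hd).1
    have hdr : (0 : ℝ) < d := by exact_mod_cast hd0
    have h3 : (N : ℝ) ≤ d * ((N / d : ℕ) + 1) := by
      exact_mod_cast (Nat.lt_mul_div_succ N hd0).le
    have h4 : (N : ℝ) / d - 1 ≤ (N / d : ℕ) := by
      have : (N : ℝ) / d ≤ (N / d : ℕ) + 1 := by
        rw [div_le_iff₀ hdr]; linarith
      linarith
    calc N * (vonMangoldt d / d) - vonMangoldt d = vonMangoldt d * ((N : ℝ) / d - 1) := by ring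
      _ ≤ _ := mul_le_mul_of_nonneg_left h4 vonMangoldt_nonneg
  have hpsi := psi_nat_le N
  rw [hid] at hfac
  have hl4 : 0 ≤ Real.log 4 := Real.log_nonneg (by norm_num)
  set s := ∑ d ∈ Finset.Ioc 0 N, vonMangoldt d / d
  rw [abs_le]
  constructor
  · refine le_of_mul_le_mul_left ?_ hN0
    nlinarith
  · refine le_of_mul_le_mul_left ?_ hN0
    nlinarith

open ArithmeticFunction in
lemma R_bound : ∃ C : ℝ, ∀ N : ℕ, 7 ≤ N →
    |∑ d ∈ Finset.Ioc 0 N, (1 - chiR d) * vonMangoldt d / d - Real.log N| ≤ C := by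
  obtain ⟨C, hC⟩ := sum_chi_vonMangoldt_bound
  refine ⟨(Real.log 4 + 4) + C, fun N hN => ?_⟩
  have h1 := hC N hN
  have h2 := mertens_first N (by omega)
  have e : ∑ d ∈ Finset.Ioc 0 N, (1 - chiR d) * vonMangoldt d / d
      = ∑ d ∈ Finset.Ioc 0 N, vonMangoldt d / d
        - ∑ d ∈ Finset.Ioc 0 N, vonMangoldt d * (chiR d / d) := by
    rw [← Finset.sum_sub_distrib]
    exact Finset.sum_congr rfl fun d _ => by ring
  rw [e]
  rw [abs_le] at *
  constructor <;> linarith [h1.1, h1.2, h2.1, h2.2]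

open Classical in
open ArithmeticFunction in
lemma prime_count : ∃ K : ℕ, 0 < K ∧ ∃ C : ℝ, 0 < C ∧ ∀ N : ℕ, 7 ≤ N →
    (N : ℝ) ≤ 2 * Real.log (K * N : ℕ) *
      (((Finset.Ioc N (K * N)).filter (fun p => p.Prime ∧ chiR p = -1)).card : ℝ)
      + C * √((K * N : ℕ) : ℝ) := by
  obtain ⟨C, hC⟩ := R_bound
  obtain ⟨D, hD⟩ := Chebyshev.psi_sub_theta_le_mul_sqrt
  obtain ⟨K, hK⟩ := exists_nat_ge (Real.exp (2 * C + 1))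
  have hKr : (0 : ℝ) < K := (Real.exp_pos _).trans_le hK
  have hK0 : 0 < K := by exact_mod_cast hKr
  have hlogK : 2 * C + 1 ≤ Real.log K := by
    rw [Real.le_log_iff_exp_le hKr]; exact hK
  refine ⟨K, hK0, 2 * |D| + 1, by positivity, fun N hN => ?_⟩
  have hN0 : (0 : ℝ) < N := by exact_mod_cast (by omega : 0 < N)
  have hNK : N ≤ K * N := Nat.le_mul_of_pos_left N hK0
  have h1 := hC N hN
  have h2 := hC (K * N) (hN.trans hNK)
  rw [← Finset.sum_Ioc_consecutive _ (Nat.zero_le N) hNK] at h2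
  have hl : Real.log ((K * N : ℕ) : ℝ) = Real.log K + Real.log N := by
    push_cast
    rw [Real.log_mul hKr.ne' hN0.ne']
  rw [hl] at h2
  have h3 : 1 ≤ ∑ d ∈ Finset.Ioc N (K * N), (1 - chiR d) * vonMangoldt d / d := by
    rw [abs_le] at *
    linarith [h1.1, h1.2, h2.1, h2.2]
  have hchi : ∀ d, 0 ≤ 1 - chiR d ∧ 1 - chiR d ≤ 2 := fun d => by
    have := abs_le.1 (chiR_abs d)
    constructor <;> linarith [this.1, this.2]
  have h4 : ∑ d ∈ Finset.Ioc N (K * N), (1 - chiR d) * vonMangoldt d / d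
      ≤ (∑ d ∈ Finset.Ioc N (K * N), (1 - chiR d) * vonMangoldt d) / N := by
    rw [Finset.sum_div]
    refine Finset.sum_le_sum fun d hd => ?_
    have := (Finset.mem_Ioc.1 hd).1
    have hnn : 0 ≤ (1 - chiR d) * vonMangoldt d := mul_nonneg (hchi d).1 vonMangoldt_nonneg
    gcongr
  have h5 : (N : ℝ) ≤ ∑ d ∈ Finset.Ioc N (K * N), (1 - chiR d) * vonMangoldt d := by
    have := h3.trans h4
    rwa [le_div_iff₀ hN0, one_mul] at this
  have h6 : ∑ d ∈ Finset.Ioc N (K * N), (1 - chiR d) * vonMangoldt d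
      ≤ ∑ d ∈ Finset.Ioc N (K * N),
        ((if d.Prime ∧ chiR d = -1 then 2 * Real.log (K * N : ℕ) else 0)
          + (if ¬ d.Prime then 2 * vonMangoldt d else 0)) := by
    refine Finset.sum_le_sum fun d hd => ?_
    obtain ⟨hd1, hd2⟩ := Finset.mem_Ioc.1 hd
    by_cases hp : d.Prime
    · simp only [hp, true_and, not_true, if_false, add_zero]
      have hcases : chiR d = 1 ∨ chiR d = -1 := by
        have : d % 2 ≠ 0 := by
          have := hp.eq_two_or_odd
          omega
        rw [chiR_eq, if_neg this]
        split_ifs <;> simp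
      rcases hcases with h | h
      · rw [h]; norm_num
      · rw [h, if_pos rfl, vonMangoldt_apply_prime hp]
        have : Real.log d ≤ Real.log (K * N : ℕ) :=
          Real.log_le_log (by exact_mod_cast hp.pos) (by exact_mod_cast hd2)
        linarith
    · simp only [hp, false_and, if_false, not_false_eq_true, if_true, zero_add]
      exact mul_le_mul_of_nonneg_right (hchi d).2 vonMangoldt_nonneg
  rw [Finset.sum_add_distrib, ← Finset.sum_filter, ← Finset.sum_filter, Finset.sum_const,
    nsmul_eq_mul, ← Finset.mul_sum] at h6
  have h7 : ∑ d ∈ Finset.Ioc N (K * N) with ¬ d.Prime, vonMangoldt d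
      ≤ |D| * √((K * N : ℕ) : ℝ) := by
    have := hD ((K * N : ℕ) : ℝ)
    rw [Chebyshev.psi_sub_theta_eq_sum_not_prime, Nat.floor_natCast] at this
    calc _ ≤ ∑ d ∈ Finset.Ioc 0 (K * N) with ¬ d.Prime, vonMangoldt d := by
          refine Finset.sum_le_sum_of_subset_of_nonneg ?_ fun _ _ _ => vonMangoldt_nonneg
          exact Finset.filter_subset_filter _ (Finset.Ioc_subset_Ioc_left (Nat.zero_le N))
      _ ≤ _ := by convert this
      _ ≤ _ := by gcongr; exact le_abs_self D
  have h8 : 0 ≤ √((K * N : ℕ) : ℝ) := Real.sqrt_nonneg _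
  linarith

lemma prime_mem (p : ℕ) (hp : p.Prime) (h7 : 7 < p) (hχ : chiR p = -1) :
    ∃ t : ℕ, 0 < t ∧ (2 : ZMod p) ^ t = -1 := by
  have := Fact.mk hp
  refine ⟨p / 2, by omega, ?_⟩
  have h := legendreSym.eq_pow p 2
  rw [legendreSym.at_two (by omega)] at h
  have : ZMod.χ₈ (p : ZMod 8) = -1 := by
    unfold chiR at hχ
    exact_mod_cast hχ
  rw [this] at h
  push_cast at h
  exact h.symm

theorem stmt_13 :
    ∃ c : ℝ, 0 < c ∧ ∃ N : ℕ, ∀ x : ℕ, N ≤ x →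
      c * x / Real.log x ≤
        (Nat.card {n : ℕ | 0 < n ∧ n ≤ x ∧ ∃ t : ℕ, 0 < t ∧ (2 : ZMod n) ^ t = -1} : ℝ) := by
  classical
  obtain ⟨K, hK, C, hC, h⟩ := prime_count
  have hKr : (0 : ℝ) < K := by exact_mod_cast hK
  obtain ⟨M, hM⟩ := exists_nat_ge ((4 * K * C) ^ 2)
  refine ⟨1 / (8 * K), by positivity, M + 7 * K + 2, fun x hx => ?_⟩
  have hN : 7 ≤ x / K := by
    rw [Nat.le_div_iff_mul_le hK]; omega
  have h1 := h (x / K) hN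
  set N := x / K with hNdef
  have hKN : K * N ≤ x := Nat.mul_div_le x K
  have hlt : x < K * (N + 1) := Nat.lt_mul_div_succ x hK
  have hNN : x ≤ 2 * (K * N) := by nlinarith
  have hx0 : (0 : ℝ) < x := by exact_mod_cast (by omega : 0 < x)
  have hlog : 0 < Real.log x := Real.log_pos (by exact_mod_cast (by omega : 1 < x))
  set P := (Finset.Ioc N (K * N)).filter (fun p => p.Prime ∧ chiR p = -1) with hP
  set A := {n : ℕ | 0 < n ∧ n ≤ x ∧ ∃ t : ℕ, 0 < t ∧ (2 : ZMod n) ^ t = -1} with hA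
  have hfin : A.Finite := (Set.finite_Iic x).subset fun n hn => hn.2.1
  have hcard : (P.card : ℝ) ≤ (Nat.card A : ℝ) := by
    have hsub : (P : Set ℕ) ⊆ A := by
      intro p hp
      have hp := Finset.mem_filter.1 (Finset.mem_coe.1 hp)
      have hI := Finset.mem_Ioc.1 hp.1
      exact ⟨by omega, by omega, prime_mem p hp.2.1 (by omega) hp.2.2⟩
    have := Set.ncard_le_ncard hsub hfin
    rw [Set.ncard_coe_finset] at this
    rw [Nat.card_coe_set_eq]
    exact_mod_cast this
  have hs : √((K * N : ℕ) : ℝ) ≤ √(x : ℝ) := Real.sqrt_le_sqrt (by exact_mod_cast hKN)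
  have hl : Real.log ((K * N : ℕ) : ℝ) ≤ Real.log x :=
    Real.log_le_log (by exact_mod_cast (by positivity : 0 < K * N)) (by exact_mod_cast hKN)
  have hsx : 4 * K * C ≤ √(x : ℝ) := by
    refine Real.le_sqrt_of_sq_le (hM.trans ?_)
    exact_mod_cast (by omega : M ≤ x)
  have hsq : √(x : ℝ) * √(x : ℝ) = x := Real.mul_self_sqrt hx0.le
  have hsn : 0 ≤ √(x : ℝ) := Real.sqrt_nonneg _
  have h2 : (x : ℝ) ≤ 2 * (K * N) := by exact_mod_cast hNN
  have h3 : (N : ℝ) ≤ 2 * Real.log x * (Nat.card A : ℝ) + C * √(x : ℝ) := by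
    refine h1.trans ?_
    gcongr
  have h4 : 4 * K * C * √(x : ℝ) ≤ x := by nlinarith
  rw [div_le_iff₀ hlog, div_mul_eq_mul_div, one_mul, div_le_iff₀ (by positivity)]
  have h5 : K * (N : ℝ) ≤ K * (2 * Real.log x * (Nat.card A : ℝ) + C * √(x : ℝ)) := by gcongr
  nlinarith
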